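/- Let X and Y be amenable UDBG metric spaces, let q₁, q₂ : X → Y be quasi-isometries with sup_{x ∈ X} d(q₁(x), q₂(x)) < ∞, and let k > 0. Then q₁ is coarsely k-to-1 if and only if q₂ is coarsely k-to-1. -/

import Mathlib

/-!
If `d(q₁ x, q₂ x) ≤ D` for all `x`, then a point `x` lying in exactly one of `q₁⁻¹(A)` and `q₂⁻¹(A)`
satisfies `q₂ x ∈ ∂_D A`, because `q₁ x` and `q₂ x` are on different sides of `A`. Hence
the two preimages differ only inside `q₂⁻¹(∂_D A)`. The fibres of a quasi-isometry have
uniformly bounded diameter, so by bounded geometry they have at most `N` points, and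
`| |q₁⁻¹(A)| - |q₂⁻¹(A)| | ≤ N |∂_D A|`. This is absorbed by enlarging the scaling constants `(r, C)`
to `(max r D, C + N)`. The two ingredients are `IsQuasiIsometry.exists_ncard_preimage_le` and
`preimage_subset_of_dist_le`.
-/

/-- A metric space is *uniformly discrete* if there is a global positive
lower bound on distances between distinct points. -/
def UniformlyDiscrete (X : Type*) [MetricSpace X] : Prop :=
  ∃ ε : ℝ, 0 < ε ∧ ∀ x y : X, x ≠ y → ε ≤ dist x y

/-- A metric space has *bounded geometry* if for every `r > 0` there is a
uniform bound on the number of points in closed balls of radius `r`. -/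
def BoundedGeometry (X : Type*) [MetricSpace X] : Prop :=
  ∀ r : ℝ, 0 < r → ∃ B : ℕ, ∀ x : X,
    (Metric.closedBall x r).Finite ∧ (Metric.closedBall x r).ncard ≤ B

/-- The `r`-boundary `∂_r S` of a set `S`: points within distance `r` of both
`S` and its complement. -/
def rBoundary {X : Type*} [MetricSpace X] (r : ℝ) (S : Set X) : Set X :=
  {x : X | Metric.infDist x S ≤ r ∧ Metric.infDist x Sᶜ ≤ r}

/-- A *Følner sequence*: nonempty finite sets whose relative `r`-boundaries
vanish asymptotically, for every `r > 0`. -/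
def IsFolnerSeq {X : Type*} [MetricSpace X] (S : ℕ → Set X) : Prop :=
  (∀ i, (S i).Nonempty ∧ (S i).Finite) ∧
  ∀ r : ℝ, 0 < r →
    Filter.Tendsto (fun i => ((rBoundary r (S i)).ncard : ℝ) / ((S i).ncard : ℝ))
      Filter.atTop (nhds 0)

/-- A UDBG space is *amenable* if it admits a Følner sequence. -/
def MetricAmenable (X : Type*) [MetricSpace X] : Prop :=
  ∃ S : ℕ → Set X, IsFolnerSeq S

/-- `q` is a `K`-quasi-isometry for some `K ≥ 1`. -/
def IsQuasiIsometry {X Y : Type*} [MetricSpace X] [MetricSpace Y] (q : X → Y) : Prop :=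
  ∃ K : ℝ, 1 ≤ K ∧
    (∀ a b : X, dist a b / K - K ≤ dist (q a) (q b) ∧ dist (q a) (q b) ≤ K * dist a b + K) ∧
    (∀ y : Y, ∃ x : X, dist y (q x) ≤ K)

/-- `q` is *coarsely k-to-1* (`k`-scaling): preimage counts of finite sets match
`k` times their size, up to a boundary-sized error. -/
def CoarselyScaling {X Y : Type*} [MetricSpace X] [MetricSpace Y] (q : X → Y) (k : ℝ) : Prop :=
  ∃ r : ℝ, 0 < r ∧ ∃ C : ℝ, 0 ≤ C ∧ ∀ A : Set Y, A.Finite →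
    |((q ⁻¹' A).ncard : ℝ) - k * (A.ncard : ℝ)| ≤ C * ((rBoundary r A).ncard : ℝ)

/-- The *scaling group* of `X`: positive reals `k` realized as the scaling
factor of some self quasi-isometry of `X`. -/
def ScalingGroup (X : Type*) [MetricSpace X] : Set ℝ :=
  {k : ℝ | 0 < k ∧ ∃ q : X → X, IsQuasiIsometry q ∧ CoarselyScaling q k}

/-- The `r`-boundary of a finite nonempty set is finite. Nonemptiness matters: `infDist x ∅ = 0`,
so the `r`-boundary of `∅` is the whole space. -/
lemma rBoundary_finite {Y : Type*} [MetricSpace Y] (hY : BoundedGeometry Y) {r : ℝ} (hr : 0 < r)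
    {A : Set Y} (hA : A.Finite) (hne : A.Nonempty) : (rBoundary r A).Finite := by
  obtain ⟨B, hB⟩ := hY r hr
  refine (hA.biUnion fun a _ => (hB a).1).subset fun x hx => ?_
  obtain ⟨a, ha, hxa⟩ := hA.isCompact.exists_infDist_eq_dist hne x
  exact Set.mem_biUnion ha (Metric.mem_closedBall.2 (hxa ▸ hx.1))

lemma rBoundary_mono {Y : Type*} [MetricSpace Y] {r s : ℝ} (h : r ≤ s) (A : Set Y) :
    rBoundary r A ⊆ rBoundary s A :=
  fun _ hx => ⟨hx.1.trans h, hx.2.trans h⟩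

/-- A quasi-isometry out of a space of bounded geometry is uniformly finite-to-one. -/
lemma IsQuasiIsometry.exists_ncard_preimage_le {X Y : Type*} [MetricSpace X] [MetricSpace Y]
    (hX : BoundedGeometry X) {q : X → Y} (hq : IsQuasiIsometry q) :
    ∃ N : ℕ, ∀ S : Set Y, S.Finite → (q ⁻¹' S).Finite ∧ (q ⁻¹' S).ncard ≤ N * S.ncard := by
  classical
  obtain ⟨K, hK, hq, -⟩ := hq
  have hK0 : 0 < K := by linarith
  obtain ⟨N, hN⟩ := hX (K * K) (by positivity)
  -- Two points with the same image are at distance at most `K ^ 2`.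
  have hfib : ∀ a b, q a = q b → a ∈ Metric.closedBall b (K * K) := fun a b hab => by
    have h := (hq a b).1
    rw [hab, dist_self, sub_nonpos, div_le_iff₀ hK0] at h
    exact h
  refine ⟨N, fun S hS => ?_⟩
  have hfin : (q ⁻¹' S).Finite := hS.preimage' fun y _ => by
    rcases (q ⁻¹' {y}).eq_empty_or_nonempty with h | ⟨b, hb⟩
    · simp [h]
    · exact (hN b).1.subset fun a ha => hfib a b (Eq.trans ha (Eq.symm hb))
  refine ⟨hfin, ?_⟩
  rw [Set.ncard_eq_toFinset_card _ hfin, Set.ncard_eq_toFinset_card _ hS]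
  refine Finset.card_le_mul_card_image_of_maps_to (f := q) (fun a ha => by simpa using ha) N
    fun y _ => ?_
  rcases (hfin.toFinset.filter fun a => q a = y).eq_empty_or_nonempty with h | ⟨b, hb⟩
  · simp [h]
  · rw [← Set.ncard_coe_finset]
    refine (Set.ncard_le_ncard (fun a ha => hfib a b ?_) (hN b).1).trans (hN b).2
    simp only [Finset.coe_filter, Set.mem_ofPred_eq, Finset.mem_filter] at ha hb
    exact ha.2.trans hb.2.symm

/-- If `f` and `g` are `r`-close and `p` is one of them, then `f⁻¹(A)` exceeds `g⁻¹(A)` only by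
points that `p` sends into the `r`-boundary of `A`. -/
lemma preimage_subset_of_dist_le {X Y : Type*} [MetricSpace Y] {f g p : X → Y} {r : ℝ}
    (hr : 0 < r) (h : ∀ x, dist (f x) (g x) ≤ r) (hp : p = f ∨ p = g) (A : Set Y) :
    f ⁻¹' A ⊆ g ⁻¹' A ∪ p ⁻¹' rBoundary r A := by
  intro x hx
  by_cases hgx : g x ∈ A
  · exact Or.inl hgx
  refine Or.inr ?_
  have hx' : f x ∈ A := hx
  have hgx' : g x ∈ Aᶜ := hgx
  rcases hp with rfl | rfl
  · exact ⟨(Metric.infDist_zero_of_mem hx').trans_le hr.le,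
      (Metric.infDist_le_dist_of_mem hgx').trans (h x)⟩
  · refine ⟨(Metric.infDist_le_dist_of_mem hx').trans ?_,
      (Metric.infDist_zero_of_mem hgx').trans_le hr.le⟩
    rw [dist_comm]
    exact h x

lemma CoarselyScaling.of_dist_le {X Y : Type*} [MetricSpace X] [MetricSpace Y]
    (hX : BoundedGeometry X) (hY : BoundedGeometry Y) {q₁ q₂ : X → Y} (hq₂ : IsQuasiIsometry q₂)
    {D : ℝ} (hD : ∀ x, dist (q₁ x) (q₂ x) ≤ D) {k : ℝ} (h : CoarselyScaling q₁ k) :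
    CoarselyScaling q₂ k := by
  obtain ⟨r, hr, C, hC, h⟩ := h
  obtain ⟨N, hN⟩ := hq₂.exists_ncard_preimage_le hX
  have hs : 0 < max r D := lt_max_of_lt_left hr
  have hd : ∀ x, dist (q₁ x) (q₂ x) ≤ max r D := fun x => (hD x).trans (le_max_right _ _)
  refine ⟨max r D, hs, C + N, by positivity, fun A hA => ?_⟩
  rcases A.eq_empty_or_nonempty with rfl | hne
  · simp only [Set.preimage_empty, Set.ncard_empty, Nat.cast_zero, mul_zero, sub_zero, abs_zero]
    positivity
  have hfin := rBoundary_finite hY hs hA hne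
  obtain ⟨hZ, hZN⟩ := hN _ hfin
  have hP₂ := (hN A hA).1
  have h₁₂ := preimage_subset_of_dist_le hs hd (Or.inr rfl) A
  have h₂₁ := preimage_subset_of_dist_le (p := q₂) hs
    (fun x => (dist_comm _ _).trans_le (hd x)) (Or.inl rfl) A
  have hP₁ : (q₁ ⁻¹' A).Finite := (hP₂.union hZ).subset h₁₂
  have c₁ := (Set.ncard_le_ncard h₁₂ (hP₂.union hZ)).trans (Set.ncard_union_le _ _)
  have c₂ := (Set.ncard_le_ncard h₂₁ (hP₁.union hZ)).trans (Set.ncard_union_le _ _)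
  have hmono : ((rBoundary r A).ncard : ℝ) ≤ (rBoundary (max r D) A).ncard := by
    exact_mod_cast Set.ncard_le_ncard (rBoundary_mono (le_max_left r D) A) hfin
  have e := (h A hA).trans (mul_le_mul_of_nonneg_left hmono hC)
  rify at c₁ c₂ hZN
  rw [abs_le] at e ⊢
  constructor <;> linarith [e.1, e.2]

/-- If two quasi-isometries between amenable UDBG spaces are at finite sup
distance, then one is coarsely `k`-to-1 iff the other is. -/
theorem coarselyScaling_of_close {X Y : Type*} [MetricSpace X] [MetricSpace Y]
    (hXud : UniformlyDiscrete X) (hXbg : BoundedGeometry X) (hXam : MetricAmenable X)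
    (hYud : UniformlyDiscrete Y) (hYbg : BoundedGeometry Y) (hYam : MetricAmenable Y)
    (q₁ q₂ : X → Y) (hq₁ : IsQuasiIsometry q₁) (hq₂ : IsQuasiIsometry q₂)
    (hclose : ∃ D : ℝ, ∀ x : X, dist (q₁ x) (q₂ x) ≤ D)
    (k : ℝ) (hk : 0 < k) :
    CoarselyScaling q₁ k ↔ CoarselyScaling q₂ k := by
  obtain ⟨D, hD⟩ := hclose
  exact ⟨CoarselyScaling.of_dist_le hXbg hYbg hq₂ hD,
    CoarselyScaling.of_dist_le hXbg hYbg hq₁ fun x => by rw [dist_comm]; exact hD x⟩
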